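/- If b_k = (-1)^k · a_0 for all k, then for every m ≥ 1 the subdiagonal entry of the zero-sum triangle satisfies t(2m, 2m-1) = (2m-1)·a_0 - a_1. -/

import Mathlib

theorem zero_sum_triangle_subdiagonal
    (a b : ℕ → ℤ) (t : ℕ → ℕ → ℤ)
    (hab : a 0 = b 0)
    (hleft : ∀ i, t i 0 = a i)
    (hdiag : ∀ i, t i i = b i)
    (hzero : ∀ i j, 0 < j → j < i → t i j = -(t (i-1) (j-1) + t (i-1) j))
    (hb : ∀ k, b k = (-1)^k * a 0)
    (m : ℕ) (hm : 1 ≤ m) :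
    t (2*m) (2*m - 1) = (2*(m : ℤ) - 1) * a 0 - a 1 := by
  have key : ∀ n : ℕ, t (n+1) n = (-1)^n * (a 1 - n * a 0) := by
    intro n
    induction n with
    | zero => simp [hleft]
    | succ n ih =>
      have h := hzero (n+1+1) (n+1) (by omega) (by omega)
      simp only [Nat.add_sub_cancel] at h
      rw [h, ih, hdiag, hb]
      push_cast
      ring
  obtain ⟨k, rfl⟩ : ∃ k, m = k + 1 := ⟨m - 1, by omega⟩
  have h := key (2*k+1)
  have e1 : 2*(k+1) - 1 = 2*k+1 := by omega
  have e2 : 2*(k+1) = 2*k+1+1 := by omega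
  rw [e1, e2, h, pow_succ, pow_mul]
  push_cast
  rw [one_pow]
  ring
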